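/- There exist split graphs with N vertices that require Ω(√N) colours to be subset square coloured: for every integer n ≥ 2, let G_n be the split graph on vertex set A ∪ B where A = {a_1, …, a_n} induces a clique, B = {b_{i,j} : 1 ≤ i, j ≤ n} is an independent set, and each b_{i,j} is adjacent exactly to a_i and a_j (so b_{i,i} has degree 1). Then G_n has n² + n vertices and χ_ssc(G_n) ≥ n − 1. -/

import Mathlib

open SimpleGraph

/-- The closed neighbourhood of `v` in `G`. -/
def closedNbhd {V : Type*} (G : SimpleGraph V) (v : V) : Set V :=
  {u | u = v ∨ G.Adj v u}

/-- `c` is a `q`-subset square colouring of `G`: colours `1, …, q` are real colours and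
colour `0` means "uncoloured"; every closed neighbourhood contains a coloured vertex, and
no nonzero colour appears on two distinct vertices of a closed neighbourhood. -/
def IsSubsetSquareColouring {V : Type*} (G : SimpleGraph V) (q : ℕ) (c : V → ℕ) : Prop :=
  (∀ v, c v ≤ q) ∧
  (∀ v, ∃ u ∈ closedNbhd G v, c u ≠ 0) ∧
  (∀ v i, 1 ≤ i → i ≤ q →
    ∀ u ∈ closedNbhd G v, ∀ w ∈ closedNbhd G v, c u = i → c w = i → u = w)

/-- The subset square chromatic number `χ_ssc G`. -/
noncomputable def sscNum {V : Type*} (G : SimpleGraph V) : ℕ :=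
  sInf {q | ∃ c : V → ℕ, IsSubsetSquareColouring G q c}

/-- The split graph on `A = Fin n` (a clique) and `B = Fin n × Fin n` (an independent
set), where `b_{i,j}` is adjacent exactly to `a_i` and `a_j`. -/
def hardSplitGraph (n : ℕ) : SimpleGraph (Fin n ⊕ Fin n × Fin n) :=
  SimpleGraph.fromRel (fun x y =>
    (∃ i j : Fin n, i ≠ j ∧ x = Sum.inl i ∧ y = Sum.inl j) ∨
    (∃ i j : Fin n, x = Sum.inr (i, j) ∧ (y = Sum.inl i ∨ y = Sum.inl j)))

theorem hs_ab {n : ℕ} (i j : Fin n) :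
    (hardSplitGraph n).Adj (Sum.inl i) (Sum.inr (i, j)) := by
  simp [hardSplitGraph]

theorem hs_aa {n : ℕ} (i j : Fin n) :
    (Sum.inl j : Fin n ⊕ Fin n × Fin n) ∈ closedNbhd (hardSplitGraph n) (Sum.inl i) := by
  by_cases h : j = i
  · left; rw [h]
  · right
    simp [hardSplitGraph, h, Ne.symm h, eq_comm]

theorem hs_b {n : ℕ} (i j : Fin n) (u : Fin n ⊕ Fin n × Fin n)
    (h : u ∈ closedNbhd (hardSplitGraph n) (Sum.inr (i, j))) :
    u = Sum.inr (i, j) ∨ u = Sum.inl i ∨ u = Sum.inl j := by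
  rcases h with h | h
  · exact Or.inl h
  · right
    rcases u with k | k
    · simpa [hardSplitGraph] using h
    · simp [hardSplitGraph] at h

theorem hs_key {n q : ℕ} (c : Fin n ⊕ Fin n × Fin n → ℕ)
    (h : IsSubsetSquareColouring (hardSplitGraph n) q c) (i : Fin n)
    (hi : c (Sum.inl i) = 0 ∨ ∀ j, c (Sum.inl j) ≠ 0) : n ≤ q := by
  obtain ⟨h1, h2, h3⟩ := h
  let f : Fin n → Fin n ⊕ Fin n × Fin n :=
    fun j => if c (Sum.inl j) = 0 then Sum.inr (i, j) else Sum.inl j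
  have hf0 : ∀ j, c (f j) ≠ 0 := by
    intro j
    by_cases hj : c (Sum.inl j) = 0
    · have hi0 : c (Sum.inl i) = 0 := hi.resolve_right (fun h => h j hj)
      simp only [f, hj, if_true]
      obtain ⟨u, hu, hc⟩ := h2 (Sum.inr (i, j))
      rcases hs_b i j u hu with rfl | rfl | rfl
      · exact hc
      · exact absurd hi0 hc
      · exact absurd hj hc
    · simpa [f, hj] using hj
  have hfN : ∀ j, f j ∈ closedNbhd (hardSplitGraph n) (Sum.inl i) := by
    intro j
    by_cases hj : c (Sum.inl j) = 0
    · simp only [f, hj, if_true]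
      exact Or.inr (hs_ab i j)
    · simp only [f, hj, if_false]
      exact hs_aa i j
  have hfi : Function.Injective f := by
    intro j k hjk
    simp only [f] at hjk
    split_ifs at hjk <;> simp_all
  have := Finset.card_le_card_of_injOn (s := Finset.univ) (t := Finset.Icc 1 q)
    (fun j => c (f j)) (by
      intro j _
      simpa using ⟨Nat.one_le_iff_ne_zero.2 (hf0 j), h1 _⟩) (by
      intro j _ k _ hjk
      exact hfi (h3 (Sum.inl i) (c (f j)) (Nat.one_le_iff_ne_zero.2 (hf0 j)) (h1 _)
        _ (hfN j) _ (hfN k) rfl hjk.symm))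
  simpa using this

theorem stmt13 (n : ℕ) (hn : 2 ≤ n) :
    Fintype.card (Fin n ⊕ Fin n × Fin n) = n ^ 2 + n ∧
    n - 1 ≤ sscNum (hardSplitGraph n) := by
  refine ⟨by simp; ring, ?_⟩
  apply le_csInf
  · let e := Fintype.equivFin (Fin n ⊕ Fin n × Fin n)
    refine ⟨Fintype.card (Fin n ⊕ Fin n × Fin n), fun v => (e v : ℕ) + 1, ?_, ?_, ?_⟩
    · intro v
      exact (e v).isLt
    · intro v
      exact ⟨v, Or.inl rfl, Nat.succ_ne_zero _⟩
    · intro v i _ _ u _ w _ hu hw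
      apply e.injective
      apply Fin.ext
      dsimp only at hu hw
      omega
  · rintro q ⟨c, hc⟩
    have : n ≤ q := by
      by_cases h : ∃ i : Fin n, c (Sum.inl i) = 0
      · obtain ⟨i, hi⟩ := h
        exact hs_key c hc i (Or.inl hi)
      · exact hs_key c hc ⟨0, by omega⟩ (Or.inr (fun j hj => h ⟨j, hj⟩))
    omega
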